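/- arXiv:1311.7449 — 6 statements merged into one kernel-verified Lean document; each statement's English description precedes it below -/
import Mathlib

section
/- Let n, θ be integers with 2 ≤ θ ≤ n−1. There exists p_c ∈ (0,1) such that for every p with p_c < p ≤ 1 one has φ_{n,p,θ}(x) > x for every x ∈ (0,1), and x = 1 is the only solution of the equation φ_{n,p,θ}(x) = x in the interval [0,1]. -/
/-- `φ_{n,p,θ}(x) = p + (1-p) * ∑_{k=θ}^{n} C(n,k) x^k (1-x)^{n-k}`. -/
noncomputable def phiBP (n θ : ℕ) (p x : ℝ) : ℝ :=
  p + (1 - p) * ∑ k ∈ Finset.Icc θ n, (n.choose k : ℝ) * x ^ k * (1 - x) ^ (n - k)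

theorem phiBP_gt (n θ : ℕ) (hθn : θ < n) (p x : ℝ) (hp : 1 - 1 / 2 ^ n < p) (hp1 : p ≤ 1)
    (hx0 : 0 ≤ x) (hx1 : x < 1) : x < phiBP n θ p x := by
  have htot : ∑ k ∈ Finset.range (n + 1), (n.choose k : ℝ) * x ^ k * (1 - x) ^ (n - k) = 1 := by
    have h := add_pow x (1 - x) n
    rw [show x + (1 - x) = 1 by ring, one_pow] at h
    refine Eq.trans ?_ h.symm
    exact Finset.sum_congr rfl fun k _ => by ring
  have hsplit := Finset.sum_range_add_sum_Ico
    (fun k => (n.choose k : ℝ) * x ^ k * (1 - x) ^ (n - k)) (show θ ≤ n + 1 by omega)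
  have hIco : Finset.Ico θ (n + 1) = Finset.Icc θ n := by ext; simp [Nat.lt_succ_iff]
  rw [htot, hIco] at hsplit
  have hle : ∑ k ∈ Finset.range θ, (n.choose k : ℝ) * x ^ k * (1 - x) ^ (n - k)
      ≤ 2 ^ n * (1 - x) := by
    have h2 : (2 : ℝ) ^ n = ∑ k ∈ Finset.range (n + 1), (n.choose k : ℝ) := by
      exact_mod_cast (Nat.sum_range_choose n).symm
    calc _ ≤ ∑ k ∈ Finset.range θ, (n.choose k : ℝ) * (1 - x) := by
          apply Finset.sum_le_sum
          intro k hk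
          have hk' : k < θ := Finset.mem_range.mp hk
          have h1 : x ^ k ≤ 1 := pow_le_one₀ hx0 hx1.le
          have h3 : (1 - x) ^ (n - k) ≤ 1 - x :=
            pow_le_of_le_one (by linarith) (by linarith) (by omega)
          have h4 : x ^ k * (1 - x) ^ (n - k) ≤ 1 * (1 - x) :=
            mul_le_mul h1 h3 (pow_nonneg (by linarith) _) zero_le_one
          rw [mul_assoc]
          exact mul_le_mul_of_nonneg_left (by linarith) (Nat.cast_nonneg _)
      _ = (∑ k ∈ Finset.range θ, (n.choose k : ℝ)) * (1 - x) := by rw [Finset.sum_mul]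
      _ ≤ _ := by
          rw [h2]
          apply mul_le_mul_of_nonneg_right _ (by linarith)
          apply Finset.sum_le_sum_of_subset_of_nonneg
          · intro k hk
            simp only [Finset.mem_range] at *
            omega
          · intros; positivity
  have hc : (1 - p) * 2 ^ n < 1 := by
    rw [← lt_div_iff₀ (by positivity)]
    linarith
  unfold phiBP
  have h5 := mul_le_mul_of_nonneg_left hle (show 0 ≤ 1 - p by linarith)
  have h6 := mul_lt_mul_of_pos_right hc (show 0 < 1 - x by linarith)
  have h7 := congrArg (fun t => (1 - p) * t) hsplit
  simp only [mul_add] at h7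
  linarith

theorem stmt_0 (n θ : ℕ) (hθ : 2 ≤ θ) (hθn : θ < n) :
    ∃ pc : ℝ, 0 < pc ∧ pc < 1 ∧
      ∀ p : ℝ, pc < p → p ≤ 1 →
        (∀ x : ℝ, 0 < x → x < 1 → phiBP n θ p x > x) ∧
        (∀ x : ℝ, 0 ≤ x → x ≤ 1 → phiBP n θ p x = x → x = 1) := by
  refine ⟨1 - 1 / 2 ^ n, ?_, ?_, ?_⟩
  · have h : (1 : ℝ) < 2 ^ n := one_lt_pow₀ (by norm_num) (by omega)
    have : (1 : ℝ) / 2 ^ n < 1 := by rw [div_lt_one (by positivity)]; exact h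
    linarith
  · have : (0 : ℝ) < 1 / 2 ^ n := by positivity
    linarith
  · intro p hp hp1
    refine ⟨fun x h0 h1 => phiBP_gt n θ hθn p x hp hp1 h0.le h1, fun x h0 h1 he => ?_⟩
    by_contra hne
    have := phiBP_gt n θ hθn p x hp hp1 h0 (lt_of_le_of_ne h1 hne)
    linarith
end

section
/- Let n, θ be integers with 2 ≤ θ ≤ n−1. There exists p* ∈ (0,1) such that for every p with p* < p < 1, the function Φ_p(x) := φ_{n,p,θ}(x) − x is strictly decreasing on [0,1]; consequently, for every such p, φ_{n,p,θ}(x) > x for all x ∈ (0,1). -/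
theorem stmt_4 (n θ : ℕ) (hθ : 2 ≤ θ) (hθn : θ < n) :
    ∃ ps : ℝ, 0 < ps ∧ ps < 1 ∧
      ∀ p : ℝ, ps < p → p < 1 →
        StrictAntiOn (fun x : ℝ => phiBP n θ p x - x) (Set.Icc 0 1) ∧
        (∀ x : ℝ, 0 < x → x < 1 → phiBP n θ p x > x) := by
  obtain ⟨S, hS⟩ : ∃ S : ℝ → ℝ, S = fun x => ∑ k ∈ Finset.Icc θ n, (n.choose k : ℝ) * x ^ k * (1 - x) ^ (n - k) := ⟨_, rfl⟩
  have hphi : ∀ p x, phiBP n θ p x = p + (1 - p) * S x := by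
    intro p x; rw [hS]; rfl
  have hC : ContDiff ℝ 1 S := by rw [hS]; fun_prop
  have hS1 : S 1 = 1 := by
    rw [hS]
    simp only [one_pow, mul_one, sub_self]
    rw [Finset.sum_eq_single n]
    · simp
    · intro b hb hbn
      have := Finset.mem_Icc.1 hb
      rw [zero_pow (by omega), mul_zero]
    · intro h
      exact absurd (Finset.mem_Icc.2 ⟨hθn.le, le_rfl⟩) h
  obtain ⟨K, hK⟩ : ∃ K : ℝ, ∀ x ∈ Set.Icc (0:ℝ) 1, ‖deriv S x‖ ≤ K :=
    isCompact_Icc.exists_bound_of_continuousOn (hC.continuous_deriv le_rfl).continuousOn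
  have hK0 : 0 ≤ K := (norm_nonneg _).trans (hK 0 (by simp))
  have hL : ∀ x ∈ Set.Icc (0:ℝ) 1, ∀ y ∈ Set.Icc (0:ℝ) 1, ‖S y - S x‖ ≤ K * ‖y - x‖ := by
    intro x hx y hy
    exact (convex_Icc (0:ℝ) 1).norm_image_sub_le_of_norm_deriv_le
      (fun z _ => (hC.differentiable one_ne_zero) z) hK hx hy
  have hi : 1 / (K + 2) < 1 := by rw [div_lt_one (by linarith)]; linarith
  have hi0 : 0 < 1 / (K + 2) := by positivity
  refine ⟨1 - 1 / (K + 2), by linarith, by linarith, ?_⟩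
  intro p hp hp1
  have hpK : (1 - p) * (K + 2) < 1 := by
    rw [← lt_div_iff₀ (by linarith)]; linarith
  have hanti : StrictAntiOn (fun x : ℝ => phiBP n θ p x - x) (Set.Icc 0 1) := by
    intro x hx y hy hxy
    have h := hL x hx y hy
    rw [Real.norm_eq_abs, Real.norm_eq_abs, abs_of_pos (sub_pos.2 hxy)] at h
    have h' := (le_abs_self _).trans h
    simp only [hphi]
    have h1 := mul_le_mul_of_nonneg_left h' (sub_pos.2 hp1).le
    have h2 : (1 - p) * K < 1 := by nlinarith
    have h3 := mul_lt_mul_of_pos_right h2 (sub_pos.2 hxy)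
    linarith
  refine ⟨hanti, fun x hx0 hx1 => ?_⟩
  have h := hanti (Set.mem_Icc.2 ⟨hx0.le, hx1.le⟩) (Set.mem_Icc.2 ⟨zero_le_one, le_rfl⟩) hx1
  simp only [hphi, hS1] at h ⊢
  linarith
end

section
/- Let n, θ be integers with 2 ≤ θ ≤ n−1. There exists r ∈ (0,1) such that ∑_{k=θ}^{n} C(n,k)·r^k·(1−r)^{n−k} = r; that is, the function Φ_0(x) := ∑_{k=θ}^{n} C(n,k)·x^k·(1−x)^{n−k} − x has a root strictly between 0 and 1. -/
lemma sum_lt_aux (n : ℕ) (A : Finset ℕ) (hA : A ⊆ Finset.range (n + 1)) (f : ℕ → ℝ) (y : ℝ)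
    (hy : y = 1 / (2 ^ n + 1)) (hf : ∀ k ∈ A, f k ≤ y ^ 2) :
    ∑ k ∈ A, (n.choose k : ℝ) * f k < y := by
  have h1 : ∑ k ∈ A, (n.choose k : ℝ) * f k ≤ ∑ k ∈ A, (n.choose k : ℝ) * y ^ 2 :=
    Finset.sum_le_sum fun k hk => mul_le_mul_of_nonneg_left (hf k hk) (Nat.cast_nonneg _)
  have h2 : ∑ k ∈ A, (n.choose k : ℝ) * y ^ 2
      ≤ ∑ k ∈ Finset.range (n + 1), (n.choose k : ℝ) * y ^ 2 :=
    Finset.sum_le_sum_of_subset_of_nonneg hA fun k _ _ => by positivity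
  have h3 : ∑ k ∈ Finset.range (n + 1), (n.choose k : ℝ) * y ^ 2 = 2 ^ n * y ^ 2 := by
    rw [← Finset.sum_mul]
    congr 1
    exact_mod_cast Nat.sum_range_choose n
  have hp : (0 : ℝ) < 2 ^ n := by positivity
  have hy0 : 0 < y := by rw [hy]; positivity
  have h4 : (2 ^ n + 1) * y = 1 := by rw [hy]; field_simp
  nlinarith

lemma term_aux (a b : ℕ) (x : ℝ) (h0 : 0 ≤ x) (h1 : x ≤ 1) (ha : 2 ≤ a) :
    x ^ a * (1 - x) ^ b ≤ x ^ 2 := by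
  have h2 : x ^ a ≤ x ^ 2 := pow_le_pow_of_le_one h0 h1 ha
  have h3 : (1 - x) ^ b ≤ 1 := pow_le_one₀ (by linarith) (by linarith)
  have h4 : 0 ≤ x ^ a := by positivity
  nlinarith

theorem stmt_6 (n θ : ℕ) (hθ : 2 ≤ θ) (hθn : θ < n) :
    ∃ r : ℝ, 0 < r ∧ r < 1 ∧
      ∑ k ∈ Finset.Icc θ n, (n.choose k : ℝ) * r ^ k * (1 - r) ^ (n - k) = r := by
  set y : ℝ := 1 / (2 ^ n + 1) with hy
  have hy0 : 0 < y := by rw [hy]; positivity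
  have hy1 : y ≤ 1 / 2 := by
    rw [hy]
    have : (1 : ℝ) ≤ 2 ^ n := one_le_pow₀ (by norm_num)
    exact one_div_le_one_div_of_le (by norm_num) (by linarith)
  set S : ℝ → ℝ := fun x =>
    ∑ k ∈ Finset.Icc θ n, (n.choose k : ℝ) * x ^ k * (1 - x) ^ (n - k) with hS
  have hlow : S y < y := by
    have h := sum_lt_aux n (Finset.Icc θ n)
      (fun k hk => by simp only [Finset.mem_Icc, Finset.mem_range] at *; omega)
      (fun k => y ^ k * (1 - y) ^ (n - k)) y hy
      (fun k hk => term_aux _ _ y hy0.le (by linarith)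
        (by simp only [Finset.mem_Icc] at hk; omega))
    simpa only [hS, mul_assoc] using h
  have hhigh : 1 - y < S (1 - y) := by
    have h := sum_lt_aux n (Finset.range θ)
      (fun k hk => by simp only [Finset.mem_range] at *; omega)
      (fun k => y ^ (n - k) * (1 - y) ^ k) y hy
      (fun k hk => term_aux _ _ y hy0.le (by linarith)
        (by simp only [Finset.mem_range] at hk; omega))
    have htot : ∑ k ∈ Finset.range (n + 1), (n.choose k : ℝ) * (y ^ (n - k) * (1 - y) ^ k) = 1 := by
      have := add_pow (1 - y) y n
      rw [sub_add_cancel, one_pow] at this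
      refine Eq.trans ?_ this.symm
      exact Finset.sum_congr rfl fun k _ => by ring
    have hsplit := Finset.sum_range_add_sum_Ico
      (fun k => (n.choose k : ℝ) * (y ^ (n - k) * (1 - y) ^ k)) (show θ ≤ n + 1 by omega)
    have hSe : S (1 - y) = ∑ k ∈ Finset.Ico θ (n + 1),
        (n.choose k : ℝ) * (y ^ (n - k) * (1 - y) ^ k) := by
      have hset : Finset.Icc θ n = Finset.Ico θ (n + 1) := by
        ext k; simp only [Finset.mem_Icc, Finset.mem_Ico]; omega
      simp only [hS, hset, sub_sub_cancel]
      exact Finset.sum_congr rfl fun k _ => by ring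
    rw [hSe]
    linarith
  have hc : ContinuousOn (fun x => S x - x) (Set.Icc y (1 - y)) := by
    apply Continuous.continuousOn
    simp only [hS]
    fun_prop
  obtain ⟨r, hr, hr0⟩ := intermediate_value_Icc (by linarith : y ≤ 1 - y) hc
    (show (0 : ℝ) ∈ Set.Icc (S y - y) (S (1 - y) - (1 - y)) from ⟨by linarith, by linarith⟩)
  exact ⟨r, by linarith [hr.1], by linarith [hr.2], sub_eq_zero.mp hr0⟩
end

section
/- Let n, θ be integers with 2 ≤ θ ≤ n−1 and define p_c := inf{ p ∈ (0,1) : φ_{n,p,θ}(x) > x for every x ∈ (0,1) }. Then 0 < p_c < 1, and for every p ∈ [0, p_c] the equation φ_{n,p,θ}(x) = x has at least one solution x ∈ (0,1). -/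
noncomputable def hBP (n θ : ℕ) (x : ℝ) : ℝ :=
  ∑ k ∈ Finset.range θ, (n.choose k : ℝ) * x ^ k * (1 - x) ^ (n - 1 - k)

lemma hBP_eq (n θ : ℕ) (hθn : θ < n) (x : ℝ) :
    (1 - x) * hBP n θ x =
      1 - ∑ k ∈ Finset.Icc θ n, (n.choose k : ℝ) * x ^ k * (1 - x) ^ (n - k) := by
  have h1 : ∑ k ∈ Finset.range (n + 1), (n.choose k : ℝ) * x ^ k * (1 - x) ^ (n - k) = 1 := by
    have h := add_pow x (1 - x) n
    rw [show x + (1 - x) = 1 by ring, one_pow] at h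
    refine Eq.trans ?_ h.symm
    exact Finset.sum_congr rfl fun k _ => by ring
  have h2 := Finset.sum_range_add_sum_Ico
    (fun k => (n.choose k : ℝ) * x ^ k * (1 - x) ^ (n - k)) (show θ ≤ n + 1 by omega)
  have h3 : Finset.Ico θ (n + 1) = Finset.Icc θ n := by
    ext k; simp only [Finset.mem_Ico, Finset.mem_Icc]; omega
  rw [h1, h3] at h2
  have h4 : (1 - x) * hBP n θ x =
      ∑ k ∈ Finset.range θ, (n.choose k : ℝ) * x ^ k * (1 - x) ^ (n - k) := by
    unfold hBP
    rw [Finset.mul_sum]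
    refine Finset.sum_congr rfl fun k hk => ?_
    have hk' := Finset.mem_range.mp hk
    rw [show n - k = (n - 1 - k) + 1 by omega, pow_succ]
    ring
  linarith

lemma phiBP_sub (n θ : ℕ) (hθn : θ < n) (p x : ℝ) :
    phiBP n θ p x - x = (1 - x) * (1 - (1 - p) * hBP n θ x) := by
  have h := hBP_eq n θ hθn x
  unfold phiBP
  linear_combination (1 - p) * h

lemma hBP_one (n θ : ℕ) (hθn : θ < n) : hBP n θ 1 = 0 := by
  unfold hBP
  refine Finset.sum_eq_zero fun k hk => ?_
  have hk' := Finset.mem_range.mp hk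
  rw [sub_self, zero_pow (by omega), mul_zero]

lemma hBP_zero (n θ : ℕ) (hθ : 2 ≤ θ) (hθn : θ < n) : hBP n θ 0 = 1 := by
  have h := hBP_eq n θ hθn 0
  rw [Finset.sum_eq_zero] at h
  · linarith
  · intro k hk
    have hk' := (Finset.mem_Icc.mp hk).1
    rw [zero_pow (by omega)]; ring

lemma hBP_big (n θ : ℕ) (hθ : 2 ≤ θ) (hθn : θ < n) :
    ∃ x : ℝ, 0 < x ∧ x < 1 ∧ 1 < hBP n θ x := by
  have hpos : (0:ℝ) < 2 ^ n := by positivity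
  have hone : (1:ℝ) ≤ 2 ^ n := one_le_pow₀ (by norm_num)
  obtain ⟨x, hx0, hx⟩ : ∃ x : ℝ, 0 < x ∧ 2 ^ n * x = 1 / 2 :=
    ⟨1 / 2 / 2 ^ n, by positivity, by field_simp⟩
  have hx1 : x < 1 := by nlinarith
  refine ⟨x, hx0, hx1, ?_⟩
  have hS : ∑ k ∈ Finset.Icc θ n, (n.choose k : ℝ) * x ^ k * (1 - x) ^ (n - k)
      ≤ 2 ^ n * x ^ 2 := by
    have hc : (2:ℝ) ^ n = ∑ k ∈ Finset.range (n + 1), (n.choose k : ℝ) := by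
      have := Nat.sum_range_choose n
      exact_mod_cast this.symm
    rw [hc, Finset.sum_mul]
    calc _ ≤ ∑ k ∈ Finset.Icc θ n, (n.choose k : ℝ) * x ^ 2 := by
          refine Finset.sum_le_sum fun k hk => ?_
          have hk' := (Finset.mem_Icc.mp hk).1
          have a : x ^ k ≤ x ^ 2 := pow_le_pow_of_le_one hx0.le hx1.le (by omega)
          have b : (1 - x) ^ (n - k) ≤ 1 := pow_le_one₀ (by linarith) (by linarith)
          calc _ ≤ (n.choose k : ℝ) * x ^ k * 1 := by gcongr
            _ ≤ _ := by rw [mul_one]; gcongr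
      _ ≤ _ := by
          refine Finset.sum_le_sum_of_subset_of_nonneg ?_ fun k _ _ => by positivity
          intro k hk
          have := (Finset.mem_Icc.mp hk).2
          exact Finset.mem_range.mpr (by omega)
  have h := hBP_eq n θ hθn x
  by_contra hcon
  have hcon := not_lt.mp hcon
  nlinarith

theorem stmt_8 (n θ : ℕ) (hθ : 2 ≤ θ) (hθn : θ < n)
    (pc : ℝ)
    (hpc : pc = sInf {p : ℝ | 0 < p ∧ p < 1 ∧ ∀ x : ℝ, 0 < x → x < 1 → phiBP n θ p x > x}) :
    0 < pc ∧ pc < 1 ∧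
    ∀ p : ℝ, 0 ≤ p → p ≤ pc → ∃ x : ℝ, 0 < x ∧ x < 1 ∧ phiBP n θ p x = x := by
  have hcont : Continuous (hBP n θ) := by unfold hBP; fun_prop
  obtain ⟨x0, hx0, hmax⟩ := (isCompact_Icc (a := (0:ℝ)) (b := 1)).exists_isMaxOn
    ⟨0, by simp⟩ hcont.continuousOn
  have hmax' : ∀ x : ℝ, 0 ≤ x → x ≤ 1 → hBP n θ x ≤ hBP n θ x0 := fun x h0 h1 => hmax ⟨h0, h1⟩
  obtain ⟨y, hy0, hy1, hy⟩ := hBP_big n θ hθ hθn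
  have hM : 1 < hBP n θ x0 := lt_of_lt_of_le hy (hmax' y hy0.le hy1.le)
  have hx00 : 0 < x0 := lt_of_le_of_ne hx0.1 (by
    rintro rfl; rw [hBP_zero n θ hθ hθn] at hM; exact lt_irrefl _ hM)
  have hx01 : x0 < 1 := lt_of_le_of_ne hx0.2 (by
    rintro rfl; rw [hBP_one n θ hθn] at hM; linarith)
  set M := hBP n θ x0 with hMdef
  have hMi : M⁻¹ < 1 := inv_lt_one_of_one_lt₀ hM
  have hMp : 0 < M⁻¹ := by positivity
  have hMM : M⁻¹ * M = 1 := inv_mul_cancel₀ (by positivity)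
  have hset : {p : ℝ | 0 < p ∧ p < 1 ∧ ∀ x : ℝ, 0 < x → x < 1 → phiBP n θ p x > x}
      = Set.Ioo (1 - M⁻¹) 1 := by
    ext p
    simp only [Set.mem_ofPred_eq, Set.mem_Ioo]
    constructor
    · rintro ⟨_, h1, h⟩
      refine ⟨?_, h1⟩
      have h2 := h x0 hx00 hx01
      have h3 := phiBP_sub n θ hθn p x0
      have h4 : 0 < (1 - x0) * (1 - (1 - p) * M) := by rw [← h3]; linarith
      have h5 := (mul_pos_iff_of_pos_left (by linarith)).mp h4
      by_contra hcon
      nlinarith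
    · rintro ⟨h0, h1⟩
      refine ⟨by linarith, h1, fun x hx hx' => ?_⟩
      have h3 := phiBP_sub n θ hθn p x
      have h4 := hmax' x hx.le hx'.le
      have h5 : (1 - p) * hBP n θ x < 1 := by
        calc _ ≤ (1 - p) * M := mul_le_mul_of_nonneg_left h4 (by linarith)
          _ < M⁻¹ * M := mul_lt_mul_of_pos_right (by linarith) (by linarith)
          _ = 1 := hMM
      have h6 := mul_pos (sub_pos.mpr hx') (sub_pos.mpr h5)
      linarith
  rw [hset, csInf_Ioo (by linarith)] at hpc
  refine ⟨by linarith, by linarith, fun p _ hp => ?_⟩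
  have hlow : 1 ≤ (1 - p) * M := by
    rw [← hMM]; exact mul_le_mul_of_nonneg_right (by linarith) (by linarith)
  have hc2 : Continuous fun x => (1 - p) * hBP n θ x := by fun_prop
  obtain ⟨x, hx, hxe⟩ := intermediate_value_Icc' hx01.le hc2.continuousOn
    (show (1:ℝ) ∈ Set.Icc _ _ from ⟨by simp [hBP_one n θ hθn], hlow⟩)
  have hxe' : (1 - p) * hBP n θ x = 1 := hxe
  refine ⟨x, lt_of_lt_of_le hx00 hx.1, lt_of_le_of_ne hx.2 ?_, ?_⟩
  · rintro rfl; rw [hBP_one n θ hθn] at hxe'; simp at hxe'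
  · have h3 := phiBP_sub n θ hθn p x
    rw [hxe'] at h3; linarith
end

section
/- Let n, θ be integers with 2 ≤ θ ≤ n−1 and let p_c := inf{ p ∈ (0,1) : φ_{n,p,θ}(x) > x for every x ∈ (0,1) }. Then there exists x ∈ (0,1) solving simultaneously the system φ_{n,p_c,θ}(x) = x and (1−p_c)·n·C(n−1,θ−1)·x^{θ−1}·(1−x)^{n−θ} = 1; i.e., the critical value p_c together with some x ∈ (0,1) satisfies φ_{n,p,θ}(x) = x and φ'_{n,p,θ}(x) = 1. -/
/-- lower binomial sum -/
noncomputable def lowBP (n m : ℕ) (x : ℝ) : ℝ :=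
  ∑ k ∈ Finset.range m, (n.choose k : ℝ) * x ^ k * (1 - x) ^ (n - k)

/-- lower binomial sum divided by `1 - x` -/
noncomputable def quoBP (n m : ℕ) (x : ℝ) : ℝ :=
  ∑ k ∈ Finset.range m, (n.choose k : ℝ) * x ^ k * (1 - x) ^ (n - k - 1)

lemma lowBP_eq (n m : ℕ) (h : m ≤ n) (x : ℝ) : lowBP n m x = (1 - x) * quoBP n m x := by
  unfold lowBP quoBP
  rw [Finset.mul_sum]
  refine Finset.sum_congr rfl fun k hk => ?_
  have hk' := Finset.mem_range.1 hk
  obtain ⟨d, rfl⟩ : ∃ d, n = k + 1 + d := ⟨n - (k + 1), by omega⟩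
  have h1 : k + 1 + d - k = d + 1 := by omega
  rw [h1, Nat.add_sub_cancel, pow_succ]
  ring

lemma phiBP_eq (n θ : ℕ) (h : θ ≤ n) (p x : ℝ) :
    phiBP n θ p x = 1 - (1 - p) * lowBP n θ x := by
  have h1 : lowBP n θ x + ∑ k ∈ Finset.Icc θ n, (n.choose k : ℝ) * x ^ k * (1 - x) ^ (n - k)
      = 1 := by
    have h2 := add_pow x (1 - x) n
    rw [add_sub_cancel, one_pow] at h2
    refine Eq.trans ?_ h2.symm
    unfold lowBP
    have h3 : Finset.Icc θ n = Finset.Ico θ (n + 1) := by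
      ext; simp
    rw [h3, Finset.sum_range_add_sum_Ico _ (by omega : θ ≤ n + 1)]
    exact Finset.sum_congr rfl fun k _ => by ring
  unfold phiBP
  linear_combination (1 - p) * h1

lemma lowBP_deriv (N m : ℕ) (h : m ≤ N) (x : ℝ) :
    HasDerivAt (lowBP (N + 1) (m + 1))
      (-(((N : ℝ) + 1) * (N.choose m : ℝ) * x ^ m * (1 - x) ^ (N - m))) x := by
  induction m with
  | zero =>
    have h1 : HasDerivAt (fun y : ℝ => (1 - y) ^ (N + 1)) _ x :=
      ((hasDerivAt_id x).const_sub 1).pow (N + 1)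
    have h2 : lowBP (N + 1) (0 + 1) = fun y : ℝ => (1 - y) ^ (N + 1) := by
      funext y; simp [lowBP]
    rw [h2]
    convert h1 using 1
    simp
  | succ m ih =>
    have ih := ih (by omega)
    have h2 : lowBP (N + 1) (m + 1 + 1) = fun y : ℝ => lowBP (N + 1) (m + 1) y +
        ((N + 1).choose (m + 1) : ℝ) * (y ^ (m + 1) * (1 - y) ^ (N - m)) := by
      funext y
      unfold lowBP
      rw [Finset.sum_range_succ _ (m + 1)]
      have : N + 1 - (m + 1) = N - m := by omega
      rw [this]; ring
    rw [h2]
    have h3 : HasDerivAt (fun y : ℝ => (1 - y) ^ (N - m)) _ x :=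
      ((hasDerivAt_id x).const_sub 1).pow (N - m)
    have h4 := ih.add (((hasDerivAt_pow (m + 1) x).mul h3).const_mul ((N + 1).choose (m + 1) : ℝ))
    refine h4.congr_deriv ?_
    have e1 : ((N : ℝ) + 1) * (N.choose m : ℝ) = ((N + 1).choose (m + 1) : ℝ) * ((m : ℝ) + 1) := by
      exact_mod_cast Nat.add_one_mul_choose_eq N m
    obtain ⟨d, rfl⟩ : ∃ d, N = m + 1 + d := ⟨N - (m + 1), by omega⟩
    have e2 : ((m + 1 + d).choose (m + 1) : ℝ) * (((m + 1 + d : ℕ) : ℝ) + 1)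
        = ((m + 1 + d + 1).choose (m + 1) : ℝ) * ((d : ℝ) + 1) := by
      have := Nat.choose_mul_succ_eq (m + 1 + d) (m + 1)
      rw [show m + 1 + d + 1 - (m + 1) = d + 1 by omega] at this
      exact_mod_cast this
    have s1 : m + 1 + d - (m + 1) = d := by omega
    have s2 : m + 1 + d - m = d + 1 := by omega
    rw [s1, s2]
    simp only [Nat.add_sub_cancel, id]
    push_cast at e1 e2 ⊢
    linear_combination -x ^ m * (1 - x) ^ (d + 1) * e1 + x ^ (m + 1) * (1 - x) ^ d * e2

lemma quoBP_big (n θ : ℕ) (hθ : 2 ≤ θ) (hθn : θ < n) :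
    ∃ x : ℝ, 0 < x ∧ x < 1 ∧ 1 < quoBP n θ x := by
  obtain ⟨d, rfl⟩ : ∃ d, n = d + 2 := ⟨n - 2, by omega⟩
  have hd : (0 : ℝ) ≤ d := Nat.cast_nonneg d
  set D : ℝ := (d + 2) ^ 2 with hD
  have hDpos : 0 < D := by positivity
  have hD1 : 1 < D := by nlinarith
  have hx0 : 0 < 1 / D := by positivity
  have hx1 : 1 / D < 1 := by rw [div_lt_one hDpos]; exact hD1
  refine ⟨1 / D, hx0, hx1, ?_⟩
  set x := 1 / D with hx
  have hxD : x * D = 1 := by rw [hx]; field_simp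
  have hle : ∑ k ∈ Finset.range 2, ((d + 2).choose k : ℝ) * x ^ k * (1 - x) ^ (d + 2 - k - 1)
      ≤ quoBP (d + 2) θ x := by
    unfold quoBP
    refine Finset.sum_le_sum_of_subset_of_nonneg (Finset.range_subset_range.2 hθ) ?_
    intro i _ _
    have : 0 ≤ 1 - x := by linarith
    positivity
  refine lt_of_lt_of_le ?_ hle
  have e : ∑ k ∈ Finset.range 2, ((d + 2).choose k : ℝ) * x ^ k * (1 - x) ^ (d + 2 - k - 1)
      = (1 - x) ^ d * (1 + (d + 1) * x) := by
    rw [Finset.sum_range_succ, Finset.sum_range_one]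
    have s1 : d + 2 - 0 - 1 = d + 1 := by omega
    have s2 : d + 2 - 1 - 1 = d := by omega
    rw [s1, s2]
    simp only [Nat.choose_zero_right, Nat.choose_one_right]
    push_cast
    ring
  rw [e]
  have hb : 1 - d * x ≤ (1 - x) ^ d := by
    have := one_add_mul_le_pow (a := -x) (by linarith) d
    rw [← sub_eq_add_neg] at this
    linarith
  have h2 : 0 < 1 + (d + 1) * x := by positivity
  have h3 : (1 - d * x) * (1 + (d + 1) * x) ≤ (1 - x) ^ d * (1 + (d + 1) * x) :=
    mul_le_mul_of_nonneg_right hb h2.le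
  refine lt_of_lt_of_le ?_ h3
  have h4 : (d : ℝ) * (d + 1) * x < 1 := by
    rw [← hxD, mul_comm x D]
    apply mul_lt_mul_of_pos_right _ hx0
    rw [hD]; nlinarith
  nlinarith

theorem stmt_9 (n θ : ℕ) (hθ : 2 ≤ θ) (hθn : θ < n)
    (pc : ℝ)
    (hpc : pc = sInf {p : ℝ | 0 < p ∧ p < 1 ∧ ∀ x : ℝ, 0 < x → x < 1 → phiBP n θ p x > x}) :
    ∃ x : ℝ, 0 < x ∧ x < 1 ∧ phiBP n θ pc x = x ∧
      (1 - pc) * n * ((n - 1).choose (θ - 1) : ℝ) * x ^ (θ - 1) * (1 - x) ^ (n - θ) = 1 := by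
  have hcont : Continuous (quoBP n θ) := by
    unfold quoBP; fun_prop
  obtain ⟨x0, hx0, hmax⟩ := isCompact_Icc.exists_isMaxOn
    (Set.nonempty_Icc.2 (zero_le_one (α := ℝ))) hcont.continuousOn
  have hmax' : ∀ x : ℝ, 0 ≤ x → x ≤ 1 → quoBP n θ x ≤ quoBP n θ x0 :=
    fun x h1 h2 => hmax ⟨h1, h2⟩
  obtain ⟨y, hy0, hy1, hy⟩ := quoBP_big n θ hθ hθn
  set M := quoBP n θ x0 with hM
  have hM1 : 1 < M := hy.trans_le (hmax' y hy0.le hy1.le)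
  have q0 : quoBP n θ 0 = 1 := by
    unfold quoBP
    rw [Finset.sum_eq_single 0]
    · simp
    · intro b _ hb; simp [hb]
    · intro h; simp at h; omega
  have q1 : quoBP n θ 1 = 0 := by
    unfold quoBP
    refine Finset.sum_eq_zero fun k hk => ?_
    have := Finset.mem_range.1 hk
    have h : n - k - 1 ≠ 0 := by omega
    simp [h]
  have hx0pos : 0 < x0 := by
    rcases hx0.1.lt_or_eq with h | h
    · exact h
    · rw [hM, ← h, q0] at hM1; exact absurd hM1 (lt_irrefl _)
  have hx0lt : x0 < 1 := by
    rcases hx0.2.lt_or_eq with h | h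
    · exact h
    · rw [hM, h, q1] at hM1; linarith
  have hMpos : 0 < M := by linarith
  have hphi : ∀ p x : ℝ, phiBP n θ p x - x = (1 - x) * (1 - (1 - p) * quoBP n θ x) := by
    intro p x
    rw [phiBP_eq n θ hθn.le, lowBP_eq n θ hθn.le]; ring
  have hset : {p : ℝ | 0 < p ∧ p < 1 ∧ ∀ x : ℝ, 0 < x → x < 1 → phiBP n θ p x > x}
      = Set.Ioo (1 - 1 / M) 1 := by
    ext p
    simp only [Set.mem_ofPred_eq, Set.mem_Ioo]
    have hinv : 1 / M < 1 := by rw [div_lt_one hMpos]; exact hM1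
    constructor
    · rintro ⟨_, hp1, h⟩
      refine ⟨?_, hp1⟩
      have h1 := h x0 hx0pos hx0lt
      have h2 := hphi p x0
      have h3 : 0 < 1 - (1 - p) * M := by
        have : 0 < (1 - x0) * (1 - (1 - p) * M) := by rw [← h2]; linarith
        exact pos_of_mul_pos_right this (by linarith)
      have : 1 - p < 1 / M := by rw [lt_div_iff₀ hMpos]; linarith
      linarith
    · rintro ⟨hp, hp1⟩
      refine ⟨by linarith, hp1, fun x h0 h1 => ?_⟩
      have h2 := hphi p x
      have h3 : (1 - p) * M < 1 := by rw [← lt_div_iff₀ hMpos]; linarith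
      have h4 : (1 - p) * quoBP n θ x ≤ (1 - p) * M :=
        mul_le_mul_of_nonneg_left (hmax' x h0.le h1.le) (by linarith)
      have : 0 < (1 - x) * (1 - (1 - p) * quoBP n θ x) :=
        mul_pos (by linarith) (by linarith)
      linarith
  have hpos : 0 < 1 / M := by positivity
  rw [hset, csInf_Ioo (by linarith)] at hpc
  have hpcM : (1 - pc) * M = 1 := by rw [hpc]; field_simp; ring
  have hpc0 : 0 < 1 - pc := by rw [hpc]; linarith
  refine ⟨x0, hx0pos, hx0lt, ?_, ?_⟩
  · have := hphi pc x0
    rw [← hM, hpcM] at this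
    linarith
  · obtain ⟨N, rfl⟩ : ∃ N, n = N + 1 := ⟨n - 1, by omega⟩
    obtain ⟨m, rfl⟩ : ∃ m, θ = m + 1 := ⟨θ - 1, by omega⟩
    have hd := lowBP_deriv N m (by omega) x0
    have hd2 : HasDerivAt (fun y => (1 - (1 - pc) * lowBP (N + 1) (m + 1) y) - y) _ x0 :=
      ((hd.const_mul (1 - pc)).const_sub 1).sub (hasDerivAt_id x0)
    have hmin : IsLocalMin (fun y => (1 - (1 - pc) * lowBP (N + 1) (m + 1) y) - y) x0 := by
      filter_upwards [Ioo_mem_nhds hx0pos hx0lt] with z hz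
      rw [← phiBP_eq _ _ hθn.le pc, ← phiBP_eq _ _ hθn.le pc, hphi, hphi, ← hM, hpcM]
      have h4 : (1 - pc) * quoBP (N + 1) (m + 1) z ≤ (1 - pc) * M :=
        mul_le_mul_of_nonneg_left (hmax' z hz.1.le hz.2.le) hpc0.le
      have : 0 ≤ (1 - z) * (1 - (1 - pc) * quoBP (N + 1) (m + 1) z) :=
        mul_nonneg (by linarith [hz.2]) (by linarith)
      linarith
    have := hmin.hasDerivAt_eq_zero hd2
    have s : N + 1 - (m + 1) = N - m := by omega
    rw [s]
    simp only [Nat.add_sub_cancel]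
    push_cast
    linarith
end

section
/- Let n, θ be integers with 2 ≤ θ ≤ n−1 and let p_c := inf{ p ∈ (0,1) : φ_{n,p,θ}(x) > x for every x ∈ (0,1) }. For every p with 0 < p < p_c, the equation φ_{n,p,θ}(x) = x has exactly two solutions in the open interval (0,1); and for every p with p_c < p < 1, it has no solutions in (0,1). -/
open Set in
/-- The main analytic fact: a unimodal polynomial `P` with `1 - B = (1 - x) P`. -/
theorem bp_unimodal (t r : ℕ) (ht : 1 ≤ t) (hr : 1 ≤ r) (T P : ℝ → ℝ) (c : ℝ) (hc : 0 < c)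
    (hT : ∀ x, HasDerivAt T (-(c * x ^ t * (1 - x) ^ r)) x)
    (hP : Differentiable ℝ P) (hTP : ∀ x, T x = (1 - x) * P x) (hT0 : T 0 = 1) :
    ∃ a, 0 < a ∧ a < 1 ∧ StrictMonoOn P (Icc 0 a) ∧ StrictAntiOn P (Icc a 1) := by
  obtain ⟨t, rfl⟩ : ∃ u, t = u + 1 := ⟨t - 1, by omega⟩
  obtain ⟨r, rfl⟩ : ∃ u, r = u + 1 := ⟨r - 1, by omega⟩
  set N : ℝ → ℝ := fun x => T x - c * x ^ (t+1) * (1 - x) ^ (r+2) with hN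
  have hNd : ∀ x, HasDerivAt N
      (c * x ^ t * (1 - x) ^ (r+1) * ((t + r + 2 : ℝ) * x - (t + 1))) x := by
    intro x
    have h1 : HasDerivAt (fun x : ℝ => 1 - x) (-1) x := by
      simpa using (hasDerivAt_id x).const_sub 1
    have h2 := (((hasDerivAt_id x).pow (t+1)).const_mul c).mul (h1.pow (r+2))
    refine ((hT x).sub h2).congr_deriv ?_
    simp
    ring
  have hNc : Continuous N := continuous_iff_continuousAt.2 fun x => (hNd x).continuousAt
  have htr : (0 : ℝ) < t + r + 2 := by positivity
  set m : ℝ := (t + 1) / (t + r + 2) with hm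
  have hm0 : 0 < m := by positivity
  have hm1 : m < 1 := by
    rw [hm, div_lt_one htr]; have : (0:ℝ) ≤ r := by positivity
    linarith
  have hmm : (t + r + 2 : ℝ) * m = t + 1 := by rw [hm]; field_simp
  have hN0 : N 0 = 1 := by simp [hN, hT0]
  have hN1 : N 1 = 0 := by simp [hN, hTP]
  have hanti : StrictAntiOn N (Icc 0 m) := by
    apply strictAntiOn_of_deriv_neg (convex_Icc _ _) hNc.continuousOn
    intro x hx
    rw [interior_Icc] at hx
    rw [(hNd x).deriv]
    have : 0 < x := hx.1
    have : 0 < 1 - x := by linarith [hx.2]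
    apply mul_neg_of_pos_of_neg (by positivity)
    nlinarith [hx.2]
  have hmono : StrictMonoOn N (Icc m 1) := by
    apply strictMonoOn_of_deriv_pos (convex_Icc _ _) hNc.continuousOn
    intro x hx
    rw [interior_Icc] at hx
    rw [(hNd x).deriv]
    have : 0 < x := by linarith [hx.1]
    have : 0 < 1 - x := by linarith [hx.2]
    apply mul_pos (by positivity)
    nlinarith [hx.1]
  have hneg : ∀ x, m ≤ x → x < 1 → N x < 0 := by
    intro x h1 h2
    have := hmono ⟨h1, h2.le⟩ ⟨hm1.le, le_rfl⟩ h2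
    linarith
  obtain ⟨a, ha, hNa⟩ : (0 : ℝ) ∈ N '' Icc 0 m :=
    intermediate_value_Icc' hm0.le hNc.continuousOn ⟨(hneg m le_rfl hm1).le, by linarith⟩
  have ha0 : 0 < a := by
    rcases ha.1.eq_or_lt with h | h
    · rw [← h] at hNa; linarith
    · exact h
  have ham : a < m := by
    rcases ha.2.eq_or_lt with h | h
    · rw [h] at hNa; linarith [hneg m le_rfl hm1]
    · exact h
  have hPd : ∀ x, (1 - x) ^ 2 * deriv P x = N x := by
    intro x
    have h1 : HasDerivAt (fun x : ℝ => 1 - x) (-1) x := by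
      simpa using (hasDerivAt_id x).const_sub 1
    have h2 := h1.mul (hP x).hasDerivAt
    have h3 : T = (fun x : ℝ => 1 - x) * P := by funext y; exact hTP y
    have h4 := hT x
    rw [h3] at h4
    have h5 := h4.unique h2
    simp only [hN, hTP]
    linear_combination (x - 1) * h5
  refine ⟨a, ha0, by linarith, ?_, ?_⟩
  · apply strictMonoOn_of_deriv_pos (convex_Icc _ _) hP.continuous.continuousOn
    intro x hx
    rw [interior_Icc] at hx
    have h1 := hanti ⟨hx.1.le, by linarith [hx.2]⟩ ha hx.2
    rw [hNa, ← hPd] at h1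
    exact pos_of_mul_pos_right h1 (sq_nonneg _)
  · apply strictAntiOn_of_deriv_neg (convex_Icc _ _) hP.continuous.continuousOn
    intro x hx
    rw [interior_Icc] at hx
    have h1 : N x < 0 := by
      rcases le_total m x with h | h
      · exact hneg x h hx.2
      · have := hanti ha ⟨by linarith [hx.1], h⟩ hx.1
        linarith
    rw [← hPd] at h1
    exact neg_of_mul_neg_right h1 (sq_nonneg _)

theorem bp_deriv (n t : ℕ) (hn : t + 1 ≤ n) (x : ℝ) :
    HasDerivAt (fun x : ℝ => ∑ k ∈ Finset.range (t+1), (n.choose k : ℝ) * x ^ k * (1 - x) ^ (n - k))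
      (-((n * (n-1).choose t : ℝ) * x ^ t * (1 - x) ^ (n - 1 - t))) x := by
  have key : ∀ t : ℕ, Polynomial.derivative (∑ k ∈ Finset.range (t+1), bernsteinPolynomial ℝ n k)
      = - (n * bernsteinPolynomial ℝ (n-1) t) := by
    intro t
    induction t with
    | zero => simp [bernsteinPolynomial.derivative_zero]
    | succ t ih =>
      rw [Finset.sum_range_succ, Polynomial.derivative_add, ih,
        bernsteinPolynomial.derivative_succ]
      ring
  have h := (∑ k ∈ Finset.range (t+1), bernsteinPolynomial ℝ n k).hasDerivAt x
  rw [key] at h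
  simp only [bernsteinPolynomial, Polynomial.eval_finsetSum, Polynomial.eval_neg,
    Polynomial.eval_mul, Polynomial.eval_pow, Polynomial.eval_sub, Polynomial.eval_one,
    Polynomial.eval_X, Polynomial.eval_natCast] at h
  exact h.congr_deriv (by ring)

open Set in
theorem stmt_10 (n θ : ℕ) (hθ : 2 ≤ θ) (hθn : θ < n)
    (pc : ℝ)
    (hpc : pc = sInf {p : ℝ | 0 < p ∧ p < 1 ∧ ∀ x : ℝ, 0 < x → x < 1 → phiBP n θ p x > x}) :
    (∀ p : ℝ, 0 < p → p < pc →
      ∃ x₁ x₂ : ℝ, x₁ ≠ x₂ ∧ 0 < x₁ ∧ x₁ < 1 ∧ 0 < x₂ ∧ x₂ < 1 ∧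
        phiBP n θ p x₁ = x₁ ∧ phiBP n θ p x₂ = x₂ ∧
        ∀ x : ℝ, 0 < x → x < 1 → phiBP n θ p x = x → x = x₁ ∨ x = x₂) ∧
    (∀ p : ℝ, pc < p → p < 1 → ∀ x : ℝ, 0 < x → x < 1 → phiBP n θ p x ≠ x) := by
  obtain ⟨t, rfl⟩ : ∃ u, θ = u + 1 := ⟨θ - 1, by omega⟩
  set T : ℝ → ℝ := fun x => ∑ k ∈ Finset.range (t+1), (n.choose k : ℝ) * x ^ k * (1 - x) ^ (n - k)
    with hTdef
  set P : ℝ → ℝ := fun x =>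
    ∑ k ∈ Finset.range (t+1), (n.choose k : ℝ) * x ^ k * (1 - x) ^ (n - 1 - k) with hPdef
  have hTP : ∀ x, T x = (1 - x) * P x := by
    intro x
    simp only [hTdef, hPdef, Finset.mul_sum]
    refine Finset.sum_congr rfl fun k hk => ?_
    have : n - k = (n - 1 - k) + 1 := by have := Finset.mem_range.1 hk; omega
    rw [this, pow_succ]; ring
  have hP : Differentiable ℝ P := by simp only [hPdef]; fun_prop
  have hP0 : P 0 = 1 := by
    simp only [hPdef]
    rw [Finset.sum_range_succ']
    simp
  have hP1 : P 1 = 0 := by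
    simp only [hPdef]
    refine Finset.sum_eq_zero fun k hk => ?_
    have : n - 1 - k ≠ 0 := by have := Finset.mem_range.1 hk; omega
    simp [this]
  have hsum : ∀ x : ℝ,
      ∑ k ∈ Finset.Icc (t+1) n, (n.choose k : ℝ) * x ^ k * (1 - x) ^ (n - k) = 1 - T x := by
    intro x
    have h1 := add_pow x (1 - x) n
    have h2 := Finset.sum_range_add_sum_Ico
      (fun k => (n.choose k : ℝ) * x ^ k * (1 - x) ^ (n - k)) (show t + 1 ≤ n + 1 by omega)
    have h3 : Finset.Ico (t+1) (n+1) = Finset.Icc (t+1) n := by ext; simp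
    rw [h3] at h2
    have h4 : ∑ k ∈ Finset.range (n+1), (n.choose k : ℝ) * x ^ k * (1 - x) ^ (n - k) = 1 := by
      rw [add_sub_cancel, one_pow] at h1
      refine Eq.trans ?_ h1.symm
      exact Finset.sum_congr rfl fun k _ => by ring
    simp only [hTdef]
    linarith
  have hphi : ∀ p x, phiBP n (t+1) p x - x = (1 - x) * (1 - (1 - p) * P x) := by
    intro p x
    rw [phiBP, hsum, hTP]; ring
  have hc : (0 : ℝ) < (n * (n-1).choose t : ℝ) := by
    have : 0 < (n-1).choose t := Nat.choose_pos (by omega)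
    have : 0 < n := by omega
    positivity
  obtain ⟨a, ha0, ha1, hmono, hanti⟩ := bp_unimodal t (n - 1 - t) (by omega) (by omega) T P _ hc
    (bp_deriv n t (by omega)) hP hTP (by rw [hTP, hP0]; norm_num)
  have hM : 1 < P a := by
    rw [← hP0]; exact hmono ⟨le_rfl, ha0.le⟩ ⟨ha0.le, le_rfl⟩ ha0
  have hmax : ∀ x, 0 < x → x < 1 → P x ≤ P a := by
    intro x h0 h1
    rcases le_total x a with h | h
    · exact hmono.monotoneOn ⟨h0.le, h⟩ ⟨ha0.le, le_rfl⟩ h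
    · exact hanti.antitoneOn ⟨le_rfl, ha1.le⟩ ⟨h, h1.le⟩ h
  have hMpos : 0 < P a := by linarith
  have hset : {p : ℝ | 0 < p ∧ p < 1 ∧ ∀ x : ℝ, 0 < x → x < 1 → phiBP n (t+1) p x > x}
      = Ioo (1 - 1 / P a) 1 := by
    have hdiv : 1 / P a < 1 := by rw [div_lt_one hMpos]; exact hM
    ext p
    constructor
    · rintro ⟨h0, h1, h⟩
      refine ⟨?_, h1⟩
      have h2 := h a ha0 ha1
      have h3 := hphi p a
      have h4 : 0 < (1 - a) * (1 - (1 - p) * P a) := by linarith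
      have h5 := pos_of_mul_pos_right h4 (by linarith)
      have : 1 - p < 1 / P a := by rw [lt_div_iff₀ hMpos]; linarith
      linarith
    · rintro ⟨h0, h1⟩
      refine ⟨by linarith, h1, fun x hx0 hx1 => ?_⟩
      have h5 : 1 - p < 1 / P a := by linarith
      rw [lt_div_iff₀ hMpos] at h5
      have h6 : (1 - p) * P x ≤ (1 - p) * P a :=
        mul_le_mul_of_nonneg_left (hmax x hx0 hx1) (by linarith)
      have := mul_pos (show 0 < 1 - x by linarith) (show 0 < 1 - (1 - p) * P x by linarith)
      have := hphi p x
      linarith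
  have hinv : 0 < 1 / P a := by positivity
  rw [hset, csInf_Ioo (by linarith)] at hpc
  subst hpc
  have hiff : ∀ p x, p < 1 → x < 1 → (phiBP n (t+1) p x = x ↔ P x = 1 / (1 - p)) := by
    intro p x hp hx
    rw [← sub_eq_zero, hphi, eq_div_iff (by linarith), mul_eq_zero]
    constructor
    · rintro (h | h) <;> linarith
    · intro h; right; linarith
  refine ⟨fun p hp0 hp => ?_, fun p hp hp1 x hx0 hx1 h => ?_⟩
  · have hp1 : p < 1 := by linarith
    have hq1 : 1 < 1 / (1 - p) := by rw [lt_div_iff₀ (by linarith)]; linarith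
    have hqM : 1 / (1 - p) < P a := by
      rw [div_lt_iff₀ (by linarith)]
      have : 1 / P a < 1 - p := by linarith
      rw [div_lt_iff₀ hMpos] at this
      linarith
    obtain ⟨x₁, hx₁, he₁⟩ : 1 / (1 - p) ∈ P '' Ioo 0 a :=
      intermediate_value_Ioo ha0.le hP.continuous.continuousOn ⟨by linarith, hqM⟩
    obtain ⟨x₂, hx₂, he₂⟩ : 1 / (1 - p) ∈ P '' Ioo a 1 :=
      intermediate_value_Ioo' ha1.le hP.continuous.continuousOn ⟨by linarith, hqM⟩
    refine ⟨x₁, x₂, (hx₁.2.trans hx₂.1).ne, hx₁.1, hx₁.2.trans ha1, ha0.trans hx₂.1, hx₂.2,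
      (hiff p x₁ hp1 (hx₁.2.trans ha1)).2 he₁, (hiff p x₂ hp1 hx₂.2).2 he₂, fun x h0 h1 h => ?_⟩
    rw [hiff p x hp1 h1] at h
    rcases le_total x a with hxa | hxa
    · left
      exact hmono.injOn ⟨h0.le, hxa⟩ ⟨hx₁.1.le, hx₁.2.le⟩ (h.trans he₁.symm)
    · right
      exact hanti.injOn ⟨hxa, h1.le⟩ ⟨hx₂.1.le, hx₂.2.le⟩ (h.trans he₂.symm)
  · have hm : p ∈ Ioo (1 - 1 / P a) 1 := ⟨hp, hp1⟩
    rw [← hset] at hm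
    exact (hm.2.2 x hx0 hx1).ne' h
end
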